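/- Let T be a simplicial tree and G ≤ Aut(T) a group whose action on T is minimal and of general type. Then for any two half-trees T₁, T₂ of T, there exists g ∈ G with g(T₁) ⊂ T₂. -/

import Mathlib

/-!
Write `H*` for the complement of a half-tree `H`, which is again a half-tree. Two facts give the
theorem.

* Nesting (`HT_nested`): of the four corners cut out by two edges of a tree one is empty, so one of
  `H₁ ⊆ H₂`, `H₁ ⊆ H₂*`, `H₁* ⊆ H₂`, `H₁* ⊆ H₂*` holds.
* Flipping (`exists_flip`): for each half-tree `H` some `g ∈ G` satisfies `g H* ⊆ H`.

Flipping `H₁` into `H₁*` and `H₂*` into `H₂` where needed reduces every nesting pattern to an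
inclusion of a translate of `H₁` in `H₂`.

If `H` could not be flipped, the translates of `H*` would meet pairwise. Minimality excludes a point
common to all of them, so without general type they would shrink to a fixed end. With the axes of two
hyperbolic elements at hand the contradiction is reached inside the tree: every translate meets both
axes (`IsLine.exists_between`), some translates meet the first axis only far away, and the Helly
property of subtrees (`helly`) forbids this because the second axis is attached to the first one along
a bounded set.

All tree geometry is derived from the graph distance by way of medians (`exists_median`) and the
concatenation of overlapping geodesics (`dist_chain`).
-/

/-- An automorphism of a tree is hyperbolic iff some vertex `v` satisfies
`0 < d(v, gv)` and `d(v, g²v) = 2 d(v, gv)`; such vertices are exactly the points of the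
axis of `g`. -/
def IsHyperbolicAut {V : Type*} (T : SimpleGraph V) (g : Equiv.Perm V) : Prop :=
  ∃ v : V, 0 < T.dist v (g v) ∧ T.dist v (g (g v)) = 2 * T.dist v (g v)

/-- The axis of a tree automorphism: the set of vertices realizing the translation. -/
def autAxis {V : Type*} (T : SimpleGraph V) (g : Equiv.Perm V) : Set V :=
  {v : V | 0 < T.dist v (g v) ∧ T.dist v (g (g v)) = 2 * T.dist v (g v)}

/-! ### Medians, convexity and half-trees -/

/-- `w` lies on the geodesic from `x` to `y`. -/
def Between {V : Type*} (T : SimpleGraph V) (x w y : V) : Prop :=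
  T.dist x w + T.dist w y = T.dist x y

/-- Geodesic convexity of a vertex set; in a tree these are the vertex sets of subtrees,
together with the empty set. -/
def Cvx {V : Type*} (T : SimpleGraph V) (S : Set V) : Prop :=
  ∀ u ∈ S, ∀ v ∈ S, ∀ w : V, Between T u w v → w ∈ S

section Trees

variable {V : Type*} {T : SimpleGraph V}

theorem Between.symm {x w y : V} (h : Between T x w y) : Between T y w x := by
  unfold Between at *
  rw [T.dist_comm (u := y) (v := w), T.dist_comm (u := w) (v := x), T.dist_comm (u := y) (v := x)]
  omega

theorem exists_btw (hT : T.IsTree) (x y : V) {n : ℕ} (hn : n ≤ T.dist x y) :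
    ∃ p, T.dist x p = n ∧ Between T x p y := by
  obtain ⟨p, hp⟩ := hT.connected.exists_walk_length_eq_dist x y
  refine ⟨p.getVert n, ?_⟩
  have h1 := SimpleGraph.dist_le (p.take n)
  have h2 := SimpleGraph.dist_le (p.drop n)
  have h3 : T.dist x y ≤ T.dist x (p.getVert n) + T.dist (p.getVert n) y :=
    hT.connected.dist_triangle
  have h4 : (p.take n).length = n := by simp [SimpleGraph.Walk.take_length]; omega
  have h5 : (p.drop n).length = p.length - n := by simp [SimpleGraph.Walk.drop_length]
  unfold Between
  omega

/-- In a tree a vertex has at most one neighbour nearer to a given vertex. -/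
theorem closer_neighbor_unique (hT : T.IsTree) {x y a b : V} (ha : T.Adj a y) (hb : T.Adj b y)
    (hxa : T.dist x a + 1 = T.dist x y) (hxb : T.dist x b + 1 = T.dist x y) : a = b := by
  obtain ⟨p, hp⟩ := hT.connected.exists_walk_length_eq_dist x a
  obtain ⟨q, hq⟩ := hT.connected.exists_walk_length_eq_dist x b
  have h1 : (p.concat ha).IsPath := SimpleGraph.Walk.isPath_of_length_eq_dist _ (by simp; omega)
  have h2 : (q.concat hb).IsPath := SimpleGraph.Walk.isPath_of_length_eq_dist _ (by simp; omega)
  have h3 := (hT.existsUnique_path x y).unique h1 h2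
  have := congrArg SimpleGraph.Walk.penultimate h3
  simpa using this

/-- Existence of medians, by induction on `T.dist y z`: the median of `x, y, z` is compared with
the one of `x, y, z'`, where `z'` precedes `z` on the geodesic from `y`. -/
theorem exists_median (hT : T.IsTree) (x y z : V) :
    ∃ m, Between T x m y ∧ Between T y m z ∧ Between T x m z := by
  have hc := hT.connected
  induction h : T.dist y z generalizing z with
  | zero =>
    obtain rfl := hc.dist_eq_zero_iff.1 h
    exact ⟨y, by simp [Between]⟩
  | succ n ih =>
    obtain ⟨z', hz', hb⟩ := exists_btw hT y z (n := n) (by omega)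
    have hadj : T.Adj z' z := SimpleGraph.dist_eq_one_iff_adj.1 (by unfold Between at hb; omega)
    have h1 : T.dist z' z = 1 := SimpleGraph.dist_eq_one_iff_adj.2 hadj
    obtain ⟨m, hm1, hm2, hm3⟩ := ih z' hz'
    have t1 : T.dist x z ≤ T.dist x m + T.dist m z := hc.dist_triangle
    have t2 : T.dist y z ≤ T.dist y m + T.dist m z := hc.dist_triangle
    have t3 : T.dist m z ≤ T.dist m z' + T.dist z' z := hc.dist_triangle
    rcases hT.dist_eq_dist_add_one_of_adj x hadj with hd | hd
    · -- here `z` is nearer to `x` than `z'`, which forces `m = z'`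
      have hmz : m = z' := by
        by_contra hne
        have hpos := hc.pos_dist_of_ne hne
        obtain ⟨a, ha, hab⟩ := exists_btw hT m z' (n := T.dist m z' - 1) (by omega)
        have haz : T.dist a z' = 1 := by unfold Between at hab; omega
        have s1 : T.dist x z' ≤ T.dist x a + T.dist a z' := hc.dist_triangle
        have s2 : T.dist x a ≤ T.dist x m + T.dist m a := hc.dist_triangle
        have s3 : T.dist y a ≤ T.dist y m + T.dist m a := hc.dist_triangle
        have : a = z := closer_neighbor_unique hT (x := x)
          (SimpleGraph.dist_eq_one_iff_adj.1 haz) hadj.symm (by unfold Between at *; omega) (by omega)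
        subst this
        unfold Between at *
        omega
      subst hmz
      have hzm : T.dist z m = 1 := by rw [SimpleGraph.dist_comm]; exact h1
      have s1 : T.dist x y ≤ T.dist x z + T.dist z y := hc.dist_triangle
      have s2 : T.dist z y = T.dist y z := SimpleGraph.dist_comm
      have s3 : T.dist m y = T.dist y m := SimpleGraph.dist_comm
      refine ⟨z, ?_, ?_, ?_⟩
      all_goals simp only [Between, SimpleGraph.dist_self] at *
      all_goals omega
    · exact ⟨m, hm1, by unfold Between at *; omega, by unfold Between at *; omega⟩

theorem btw_unique (hT : T.IsTree) {x y p q : V} (hp : Between T x p y) (hq : Between T x q y)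
    (h : T.dist x p = T.dist x q) : p = q := by
  have hc := hT.connected
  induction hn : T.dist x p generalizing p q with
  | zero =>
    exact (hc.dist_eq_zero_iff.1 hn).symm.trans (hc.dist_eq_zero_iff.1 (h.symm.trans hn))
  | succ n ih =>
    obtain ⟨p', hp', hpb⟩ := exists_btw hT x p (n := n) (by omega)
    obtain ⟨q', hq', hqb⟩ := exists_btw hT x q (n := n) (by omega)
    unfold Between at *
    have a1 : T.dist x y ≤ T.dist x p' + T.dist p' y := hc.dist_triangle
    have a2 : T.dist p' y ≤ T.dist p' p + T.dist p y := hc.dist_triangle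
    have a3 : T.dist x y ≤ T.dist x q' + T.dist q' y := hc.dist_triangle
    have a4 : T.dist q' y ≤ T.dist q' q + T.dist q y := hc.dist_triangle
    have : p' = q' := ih (by omega) (by omega) (by omega) hp'
    subst this
    have e1 : T.dist y p = T.dist p y := SimpleGraph.dist_comm
    have e2 : T.dist y q = T.dist q y := SimpleGraph.dist_comm
    have e3 : T.dist y p' = T.dist p' y := SimpleGraph.dist_comm
    exact closer_neighbor_unique hT (x := y)
      (SimpleGraph.dist_eq_one_iff_adj.1 (by omega : T.dist p' p = 1)).symm
      (SimpleGraph.dist_eq_one_iff_adj.1 (by omega : T.dist p' q = 1)).symm (by omega) (by omega)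

/-- Points of a geodesic are linearly ordered by their distance to its origin. -/
theorem btw_of_le (hT : T.IsTree) {x y p q : V} (hp : Between T x p y) (hq : Between T x q y)
    (h : T.dist x p ≤ T.dist x q) : Between T x p q := by
  have hc := hT.connected
  obtain ⟨p', hp', hb⟩ := exists_btw hT x q h
  have a1 : T.dist x y ≤ T.dist x p' + T.dist p' y := hc.dist_triangle
  have a2 : T.dist p' y ≤ T.dist p' q + T.dist q y := hc.dist_triangle
  have : p = p' := btw_unique hT hp (by unfold Between at *; omega) hp'.symm
  exact this ▸ hb

/-- Two geodesics overlapping in a nondegenerate segment `[v, u]` concatenate to a geodesic. -/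
theorem dist_chain (hT : T.IsTree) {w v u w' : V} (hne : v ≠ u) (h1 : Between T w v u)
    (h2 : Between T v u w') : T.dist w w' = T.dist w v + T.dist v u + T.dist u w' := by
  have hc := hT.connected
  obtain ⟨m, hm1, hm2, hm3⟩ := exists_median hT v w w'
  have hpos := hc.pos_dist_of_ne hne
  have e1 : T.dist w v = T.dist v w := SimpleGraph.dist_comm
  have e2 : T.dist m w = T.dist w m := SimpleGraph.dist_comm
  have e3 : T.dist v m = T.dist m v := SimpleGraph.dist_comm
  have e4 : T.dist u m = T.dist m u := SimpleGraph.dist_comm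
  have t : T.dist w u ≤ T.dist w m + T.dist m u := hc.dist_triangle
  rcases le_total (T.dist v m) (T.dist v u) with h | h
  · have h3 := btw_of_le hT hm3 h2 h
    have : v = m := hc.dist_eq_zero_iff.1 (by unfold Between at *; omega)
    subst this
    unfold Between at *; omega
  · have h3 := btw_of_le hT h2 hm3 h
    unfold Between at *; omega

theorem cvx_interval (hT : T.IsTree) (x y : V) : Cvx T {w | Between T x w y} := by
  have hc := hT.connected
  have key : ∀ p q w, Between T x p y → Between T x q y → Between T p w q → T.dist x p ≤ T.dist x q →
      Between T x w y := by
    intro p q w hp hq hw h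
    have h1 := btw_of_le hT hp hq h
    have a1 : T.dist x y ≤ T.dist x w + T.dist w y := hc.dist_triangle
    have a2 : T.dist w y ≤ T.dist w q + T.dist q y := hc.dist_triangle
    have a3 : T.dist x w ≤ T.dist x p + T.dist p w := hc.dist_triangle
    unfold Between at *; omega
  intro p hp q hq w hw
  rcases le_total (T.dist x p) (T.dist x q) with h | h
  · exact key p q w hp hq hw h
  · exact key q p w hq hp hw.symm h

theorem cvx_union (hT : T.IsTree) {X Y : Set V} (hX : Cvx T X) (hY : Cvx T Y) {y : V}
    (hyX : y ∈ X) (hyY : y ∈ Y) : Cvx T (X ∪ Y) := by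
  have key : ∀ p ∈ X, ∀ q ∈ Y, ∀ w, Between T p w q → w ∈ X ∪ Y := by
    intro p hp q hq w hw
    obtain ⟨m, hm1, hm2, hm3⟩ := exists_median hT p q y
    have hmX : m ∈ X := hX p hp y hyX m hm3
    have hmY : m ∈ Y := hY q hq y hyY m hm2
    rcases le_total (T.dist p w) (T.dist p m) with h | h
    · exact Or.inl (hX p hp m hmX w (btw_of_le hT hw hm1 h))
    · refine Or.inr (hY m hmY q hq w ?_)
      have := btw_of_le hT hm1 hw h
      unfold Between at *; omega
  rintro p (hp | hp) q (hq | hq) w hw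
  · exact Or.inl (hX p hp q hq w hw)
  · exact key p hp q hq w hw
  · exact key q hq p hp w hw.symm
  · exact Or.inr (hY p hp q hq w hw)

/-- Helly property of subtrees: the median of three pairwise common points is common to all. -/
theorem helly (hT : T.IsTree) {X Y Z : Set V} (hX : Cvx T X) (hY : Cvx T Y) (hZ : Cvx T Z)
    (hXY : (X ∩ Y).Nonempty) (hYZ : (Y ∩ Z).Nonempty) (hXZ : (X ∩ Z).Nonempty) :
    ∃ m, m ∈ X ∧ m ∈ Y ∧ m ∈ Z := by
  obtain ⟨x, hx1, hx2⟩ := hXY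
  obtain ⟨y, hy1, hy2⟩ := hYZ
  obtain ⟨z, hz1, hz2⟩ := hXZ
  obtain ⟨m, hm1, hm2, hm3⟩ := exists_median hT x y z
  exact ⟨m, hX x hx1 z hz1 m hm3, hY x hx2 y hy1 m hm1, hZ y hy2 z hz2 m hm2⟩

/-- The half-tree containing `v` that is cut off by the edge `uv`. -/
def HT {V : Type*} (T : SimpleGraph V) (u v : V) : Set V := {w | T.dist w v < T.dist w u}

theorem not_mem_HT (hT : T.IsTree) {u v : V} (h : T.Adj u v) {w : V} :
    w ∉ HT T u v ↔ w ∈ HT T v u := by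
  have := hT.dist_eq_dist_add_one_of_adj w h
  simp only [HT, Set.mem_ofPred_eq]
  omega

/-- A geodesic crossing from one side of an edge to the other runs through that edge. -/
theorem HT_cross (hT : T.IsTree) {u v : V} (h : T.Adj u v) {w w' : V} (hw : w ∈ HT T u v)
    (hw' : w' ∈ HT T v u) : T.dist w w' = T.dist w v + 1 + T.dist u w' := by
  have h1 := hT.dist_eq_dist_add_one_of_adj w h
  have h2 := hT.dist_eq_dist_add_one_of_adj w' h
  have h3 : T.dist v u = 1 := SimpleGraph.dist_eq_one_iff_adj.2 h.symm
  simp only [HT, Set.mem_ofPred_eq] at hw hw'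
  have e1 : T.dist w' v = T.dist v w' := SimpleGraph.dist_comm
  have e2 : T.dist w' u = T.dist u w' := SimpleGraph.dist_comm
  have := dist_chain hT (w := w) (w' := w') h.ne.symm (by unfold Between; omega) (by unfold Between; omega)
  omega

theorem cvx_HT (hT : T.IsTree) {u v : V} (h : T.Adj u v) : Cvx T (HT T u v) := by
  intro x hx y hy w hw
  by_contra hn
  have hn := (not_mem_HT hT h).1 hn
  have h1 := HT_cross hT h hx hn
  have h2 := HT_cross hT h hy hn
  have h3 : T.dist x y ≤ T.dist x v + T.dist v y := hT.connected.dist_triangle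
  have e1 : T.dist y v = T.dist v y := SimpleGraph.dist_comm
  have e2 : T.dist w y = T.dist y w := SimpleGraph.dist_comm
  unfold Between at hw
  omega

/-- Half-trees are nested: one of the four corners cut out by two edges is empty. If all corners
were inhabited, the edge `u₂v₂` would lie on geodesics inside both sides of `u₁v₁`. -/
theorem HT_nested (hT : T.IsTree) {u₁ v₁ u₂ v₂ : V} (h₁ : T.Adj u₁ v₁) (h₂ : T.Adj u₂ v₂) :
    HT T u₁ v₁ ⊆ HT T u₂ v₂ ∨ HT T u₁ v₁ ⊆ HT T v₂ u₂ ∨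
      HT T v₁ u₁ ⊆ HT T u₂ v₂ ∨ HT T v₁ u₁ ⊆ HT T v₂ u₂ := by
  by_contra! hcon
  obtain ⟨c1, c2, c3, c4⟩ := hcon
  obtain ⟨a, ha, ha'⟩ := Set.not_subset.1 c1
  obtain ⟨b, hb, hb'⟩ := Set.not_subset.1 c2
  obtain ⟨c, hc, hc'⟩ := Set.not_subset.1 c3
  obtain ⟨d, hd, hd'⟩ := Set.not_subset.1 c4
  rw [not_mem_HT hT h₂] at ha' hc'
  rw [not_mem_HT hT h₂.symm] at hb' hd'
  have key : ∀ x ∈ HT T u₂ v₂, ∀ y ∈ HT T v₂ u₂, Between T x v₂ y := by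
    intro x hx y hy
    have h3 := HT_cross hT h₂ hx hy
    have h4 : T.dist v₂ u₂ = 1 := SimpleGraph.dist_eq_one_iff_adj.2 h₂.symm
    have a1 : T.dist x y ≤ T.dist x v₂ + T.dist v₂ y := hT.connected.dist_triangle
    have a2 : T.dist v₂ y ≤ T.dist v₂ u₂ + T.dist u₂ y := hT.connected.dist_triangle
    unfold Between; omega
  have m1 := cvx_HT hT h₁ b hb a ha _ (key b hb' a ha')
  have m2 := cvx_HT hT h₁.symm d hd c hc _ (key d hd' c hc')
  exact (not_mem_HT hT h₁).2 m2 m1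

/-! ### Axes of hyperbolic automorphisms -/

/-- `γ` is a bi-infinite geodesic along which `a` translates by `l > 0`. -/
structure IsLine {V : Type*} (T : SimpleGraph V) (a : Equiv.Perm V) (γ : ℤ → V) (l : ℕ) : Prop where
  pos : 0 < l
  dist_eq : ∀ i j : ℤ, (T.dist (γ i) (γ j) : ℤ) = |i - j|
  shift : ∀ i, a (γ i) = γ (i + l)

namespace IsLine

variable {a : Equiv.Perm V} {γ : ℤ → V} {l : ℕ}

theorem between (h : IsLine T a γ l) {i j k : ℤ} (hij : i ≤ j) (hjk : j ≤ k) :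
    Between T (γ i) (γ j) (γ k) := by
  have h1 := h.dist_eq i j
  have h2 := h.dist_eq j k
  have h3 := h.dist_eq i k
  rw [abs_of_nonpos (by omega)] at h1 h2 h3
  unfold Between
  omega

theorem pow_shift (h : IsLine T a γ l) (n : ℕ) (i : ℤ) : (a ^ n) (γ i) = γ (i + n * l) := by
  induction n with
  | zero => simp
  | succ n ih =>
    rw [pow_succ', Equiv.Perm.mul_apply, ih, h.shift]
    congr 1
    push_cast
    ring

theorem inv_pow_shift (h : IsLine T a γ l) (n : ℕ) (i : ℤ) :
    (a ^ n)⁻¹ (γ i) = γ (i - n * l) := by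
  rw [Equiv.Perm.inv_eq_iff_eq, h.pow_shift]
  congr 1
  ring

theorem mem_autAxis (h : IsLine T a γ l) (i : ℤ) : γ i ∈ autAxis T a := by
  have h1 := h.dist_eq i (i + l)
  have h2 := h.dist_eq i (i + l + l)
  have := h.pos
  rw [abs_of_nonpos (by omega)] at h1 h2
  simp only [autAxis, Set.mem_ofPred_eq, h.shift]
  omega

theorem injective (h : IsLine T a γ l) : Function.Injective γ := by
  intro i j hij
  have h1 := h.dist_eq i j
  rw [hij, SimpleGraph.dist_self] at h1
  have := abs_eq_zero.1 h1.symm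
  omega

theorem cvx_range (hT : T.IsTree) (h : IsLine T a γ l) : Cvx T (Set.range γ) := by
  have key : ∀ i j w, i ≤ j → Between T (γ i) w (γ j) → w ∈ Set.range γ := by
    intro i j w hij hw
    have h1 := h.dist_eq i j
    have h2 := h.dist_eq i (i + T.dist (γ i) w)
    rw [abs_of_nonpos (by omega)] at h1 h2
    have hle : i + T.dist (γ i) w ≤ j := by unfold Between at hw; omega
    exact ⟨_, btw_unique hT (h.between (by omega) hle) hw (by omega)⟩
  rintro _ ⟨i, rfl⟩ _ ⟨j, rfl⟩ w hw
  rcases le_total i j with hij | hij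
  · exact key i j w hij hw
  · exact key j i w hij hw.symm

/-- Every geodesic from a vertex `z` to its translate `a z` meets the axis of `a`: it runs from `z`
to its projection `p` to the axis, along the axis to `a p`, and on to `a z`. -/
theorem exists_between (hT : T.IsTree) (h : IsLine T a γ l)
    (ha : ∀ u v, T.dist (a u) (a v) = T.dist u v) (z : V) : ∃ i, Between T z (γ i) (a z) := by
  have hc := hT.connected
  obtain ⟨i, hi⟩ : ∃ i, ∀ j, T.dist z (γ i) ≤ T.dist z (γ j) :=
    ⟨_, fun j => Function.argmin_le (fun i => T.dist z (γ i)) j⟩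
  have hproj : ∀ j, Between T z (γ i) (γ j) := by
    intro j
    obtain ⟨m, hm1, hm2, hm3⟩ := exists_median hT z (γ i) (γ j)
    obtain ⟨k, rfl⟩ := h.cvx_range hT _ ⟨i, rfl⟩ _ ⟨j, rfl⟩ m hm2
    have h1 := hi k
    have : γ k = γ i := hc.dist_eq_zero_iff.1 (by unfold Between at hm1; omega)
    rwa [this] at hm3
  refine ⟨i, ?_⟩
  have hl := h.pos
  have e0 : a (γ (i - l)) = γ i := by rw [h.shift]; congr 1; ring
  have e1 := ha z (γ (i - l))
  have e2 := ha z (γ i)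
  rw [e0] at e1
  rw [h.shift] at e2
  have e3 := h.dist_eq i (i - l)
  have e4 := h.dist_eq i (i + l)
  rw [abs_of_nonneg (by omega)] at e3
  rw [abs_of_nonpos (by omega)] at e4
  have e5 : T.dist (γ i) (a z) = T.dist (a z) (γ i) := SimpleGraph.dist_comm
  have e6 : T.dist (γ (i + l)) (a z) = T.dist (a z) (γ (i + l)) := SimpleGraph.dist_comm
  have p1 := hproj (i - l)
  have hne : γ i ≠ γ (i + l) := fun hh => by have := h.injective hh; omega
  have h2 : Between T (γ i) (γ (i + l)) (a z) := by unfold Between at *; omega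
  have := dist_chain hT hne (hproj (i + l)) h2
  unfold Between at *
  omega

end IsLine

theorem dist_map_of_adj_iff (hT : T.IsTree) {G : Subgroup (Equiv.Perm V)}
    (hG : ∀ g ∈ G, ∀ u v : V, T.Adj (g u) (g v) ↔ T.Adj u v) :
    ∀ g ∈ G, ∀ u v : V, T.dist (g u) (g v) = T.dist u v := by
  have key : ∀ g ∈ G, ∀ u v : V, T.dist (g u) (g v) ≤ T.dist u v := by
    intro g hg u v
    obtain ⟨p, hp⟩ := hT.connected.exists_walk_length_eq_dist u v
    let f : T →g T := ⟨g, fun {x y} h => (hG g hg x y).2 h⟩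
    have := SimpleGraph.dist_le (p.map f)
    rw [SimpleGraph.Walk.length_map, hp] at this
    exact this
  intro g hg u v
  refine le_antisymm (key g hg u v) ?_
  simpa using key g⁻¹ (G.inv_mem hg) (g u) (g v)

/-- Local-to-global step for hyperbolic elements: the translates of a geodesic `[v, a v]`
concatenate to a geodesic. -/
theorem dist_pow (hT : T.IsTree) {a : Equiv.Perm V}
    (ha : ∀ (n : ℕ) (u v : V), T.dist ((a ^ n) u) ((a ^ n) v) = T.dist u v) {v : V}
    (h0 : 0 < T.dist v (a v)) (h2 : T.dist v (a (a v)) = 2 * T.dist v (a v)) (n : ℕ) :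
    T.dist v ((a ^ n) v) = n * T.dist v (a v) ∧
      T.dist v ((a ^ (n + 1)) v) = (n + 1) * T.dist v (a v) := by
  induction n with
  | zero => simp
  | succ n ih =>
    refine ⟨by push_cast; exact ih.2, ?_⟩
    obtain ⟨i1, i2⟩ := ih
    have e1 := ha n v (a v)
    have e2 := ha n v (a (a v))
    have e3 := ha (n + 1) v (a v)
    simp only [← Equiv.Perm.mul_apply, ← pow_succ] at e1 e2 e3
    have e4 : a ^ n * (a * a) = a ^ (n + 1 + 1) := by simp only [pow_succ, mul_assoc]
    rw [e4] at e2
    have hne : (a ^ n) v ≠ (a ^ (n + 1)) v := by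
      intro hh
      rw [hh, SimpleGraph.dist_self] at e1
      omega
    have := dist_chain hT (w := v) (w' := (a ^ (n + 1 + 1)) v) hne
      (by unfold Between; rw [i1, i2, e1]; ring)
      (by unfold Between; rw [e1, e2, e3, Equiv.Perm.mul_apply, h2]; ring)
    rw [this, i1, e1, e3]
    ring

theorem exists_isLine (hT : T.IsTree) {G : Subgroup (Equiv.Perm V)}
    (hG : ∀ g ∈ G, ∀ u v : V, T.dist (g u) (g v) = T.dist u v) {a : Equiv.Perm V} (ha : a ∈ G)
    (hyp : IsHyperbolicAut T a) : ∃ γ l, IsLine T a γ l := by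
  have hc := hT.connected
  obtain ⟨v, h0, h2⟩ := hyp
  obtain ⟨p, hp⟩ := hc.exists_walk_length_eq_dist v (a v)
  obtain ⟨l, hl⟩ : ∃ l, l = T.dist v (a v) := ⟨_, rfl⟩
  rw [← hl] at hp h0
  have hz : ∀ (q : ℤ) u v, T.dist ((a ^ q) u) ((a ^ q) v) = T.dist u v :=
    fun q => hG _ (G.zpow_mem ha q)
  have hl0 : (0 : ℤ) < l := by exact_mod_cast h0
  -- concatenate the translates of the geodesic `p` from `v` to `a v`
  obtain ⟨γ, hγ⟩ : ∃ γ : ℤ → V, ∀ i, γ i = (a ^ (i / l)) (p.getVert (i % l).toNat) :=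
    ⟨_, fun _ => rfl⟩
  have form : ∀ (q : ℤ) (r : ℕ), r ≤ l → γ (q * l + r) = (a ^ q) (p.getVert r) := by
    intro q r hr
    rw [hγ]
    rcases hr.lt_or_eq with hr | rfl
    · have hr' : (r : ℤ) < l := by exact_mod_cast hr
      have e1 : (q * l + r) / (l : ℤ) = q := by
        rw [add_comm, Int.add_mul_ediv_right _ _ hl0.ne', Int.ediv_eq_zero_of_lt (by omega) hr',
          zero_add]
      have e2 : (q * l + r) % (l : ℤ) = r := by
        rw [add_comm, Int.add_mul_emod_self_right, Int.emod_eq_of_lt (by omega) hr']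
      rw [e1, e2, Int.toNat_natCast]
    · have e : q * (r : ℤ) + r = (q + 1) * r := by ring
      rw [e, Int.mul_ediv_cancel _ hl0.ne', Int.mul_emod_left, Int.toNat_zero,
        p.getVert_zero, ← hp, p.getVert_length, zpow_add_one, Equiv.Perm.mul_apply]
  have decomp : ∀ i : ℤ, ∃ (q : ℤ) (r : ℕ), r < l ∧ i = q * l + r := by
    intro i
    have h1 := Int.emod_nonneg i hl0.ne'
    have h3 := Int.emod_lt_of_pos i hl0
    refine ⟨i / l, (i % l).toNat, by omega, ?_⟩
    rw [Int.toNat_of_nonneg h1, mul_comm]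
    exact (Int.mul_ediv_add_emod i l).symm
  have step : ∀ i, T.dist (γ i) (γ (i + 1)) ≤ 1 := by
    intro i
    obtain ⟨q, r, hr, rfl⟩ := decomp i
    have e := form q (r + 1) (by omega)
    push_cast at e
    rw [← add_assoc] at e
    rw [form q r hr.le, e, hz]
    exact (SimpleGraph.dist_eq_one_iff_adj.2 (p.adj_getVert_succ (by omega))).le
  have lip : ∀ (n : ℕ) i, T.dist (γ i) (γ (i + n)) ≤ n := by
    intro n i
    induction n with
    | zero => simp
    | succ n ih =>
      have t : T.dist (γ i) (γ (i + n + 1)) ≤ _ := hc.dist_triangle (v := γ (i + n))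
      have := step (i + n)
      push_cast
      rw [← add_assoc]
      omega
  have lip' : ∀ i j : ℤ, i ≤ j → (T.dist (γ i) (γ j) : ℤ) ≤ j - i := by
    intro i j hij
    have := lip (j - i).toNat i
    rw [Int.toNat_of_nonneg (by omega), add_sub_cancel] at this
    omega
  have base : ∀ q : ℤ, γ (q * l) = (a ^ q) v := by
    intro q
    have := form q 0 (by omega)
    simpa using this
  have long : ∀ n : ℕ, (T.dist (γ (-n * l)) (γ (n * l)) : ℤ) = 2 * n * l := by
    intro n
    have h3 := (dist_pow hT (fun n => hG _ (G.pow_mem ha n)) (hl ▸ h0) h2 (2 * n)).1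
    rw [base, base, ← hz n, ← Equiv.Perm.mul_apply, ← Equiv.Perm.mul_apply, ← zpow_add, ← zpow_add,
      add_neg_cancel, zpow_zero, Equiv.Perm.one_apply, ← two_mul]
    rw [← hl] at h3
    exact_mod_cast h3
  have geo : ∀ i j : ℤ, i ≤ j → (T.dist (γ i) (γ j) : ℤ) = j - i := by
    intro i j hij
    refine le_antisymm (lip' i j hij) ?_
    have h3 := long (i.natAbs + j.natAbs)
    obtain ⟨M, hM⟩ : ∃ M : ℤ, M = ((i.natAbs + j.natAbs : ℕ) : ℤ) * l := ⟨_, rfl⟩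
    have hM' : ((i.natAbs + j.natAbs : ℕ) : ℤ) ≤ M := by rw [hM]; nlinarith
    rw [neg_mul, mul_assoc, ← hM] at h3
    have s1 := lip' (-M) i (by omega)
    have s2 := lip' j M (by omega)
    have t1 : T.dist (γ (-M)) (γ M) ≤ _ := hc.dist_triangle (v := γ i)
    have t2 : T.dist (γ i) (γ M) ≤ _ := hc.dist_triangle (v := γ j)
    omega
  refine ⟨γ, l, h0, ?_, ?_⟩
  · intro i j
    rcases le_total i j with hij | hij
    · rw [geo i j hij, abs_of_nonpos (by omega)]; ring
    · rw [SimpleGraph.dist_comm, geo j i hij, abs_of_nonneg (by omega)]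
  · intro i
    obtain ⟨q, r, hr, rfl⟩ := decomp i
    have e : q * (l : ℤ) + r + l = (q + 1) * l + r := by ring
    rw [e, form _ r hr.le, form _ r hr.le, add_comm q, zpow_one_add, Equiv.Perm.mul_apply]

/-! ### Flipping half-trees -/

/-- Every half-tree can be flipped: some `g ∈ G` carries the complement of a half-tree into it.

Otherwise all translates of the complement `K` meet pairwise. Their intersection is convex and
invariant, hence empty by minimality. So some translate misses a vertex of the axis `A` of `a`, hence
meets `A` in a ray, and powers of `a` shrink this ray away from any bounded part of `A`. Joining the
axis `B` of `b` to `A` by a geodesic yields a subtree `D` with `A ∩ D` finite and nonempty. The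
translates of `K` meet both `A` and `B ⊆ D`, so the Helly property puts a point of each of them in
`A ∩ D`, a contradiction. -/
theorem exists_flip (hT : T.IsTree) {G : Subgroup (Equiv.Perm V)}
    (hG : ∀ g ∈ G, ∀ u v : V, T.dist (g u) (g v) = T.dist u v)
    (hmin : ∀ S : Set V, S.Nonempty → Cvx T S → (∀ g ∈ G, (⇑g) '' S = S) → S = Set.univ)
    (hgen : ∃ g ∈ G, ∃ h ∈ G, IsHyperbolicAut T g ∧ IsHyperbolicAut T h ∧
      (autAxis T g ∩ autAxis T h).Finite)
    {u v : V} (huv : T.Adj u v) : ∃ g ∈ G, ∀ z ∈ HT T v u, g z ∈ HT T u v := by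
  by_contra! hcon
  have hK := cvx_HT hT huv.symm
  have hint : ∀ g ∈ G, ∃ z ∈ HT T v u, g z ∈ HT T v u := by
    intro g hg
    obtain ⟨z, hz, hz'⟩ := hcon g hg
    exact ⟨z, hz, (not_mem_HT hT huv).1 hz'⟩
  have hvK : v ∉ HT T v u := by simp [HT]
  obtain ⟨K, hKdef⟩ : ∃ K, K = HT T v u := ⟨_, rfl⟩
  rw [← hKdef] at hK hint hvK
  have hC : ∀ g ∈ G, Cvx T {x | g x ∈ K} := by
    intro g hg x hx y hy w hw
    refine hK _ hx _ hy _ ?_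
    unfold Between at *
    rw [hG g hg, hG g hg, hG g hg, hw]
  have hmiss : ∀ x, ∃ g ∈ G, g x ∉ K := by
    by_contra! hx
    obtain ⟨x, hx⟩ := hx
    have hS := hmin {x | ∀ g ∈ G, g x ∈ K} ⟨x, hx⟩
      (fun p hp q hq w hw g hg => hC g hg p (hp g hg) q (hq g hg) w hw) (by
        intro g hg
        ext y
        constructor
        · rintro ⟨x, hx, rfl⟩ k hk
          exact hx (k * g) (G.mul_mem hk hg)
        · intro hy
          exact ⟨g⁻¹ y, fun k hk => hy (k * g⁻¹) (G.mul_mem hk (G.inv_mem hg)), by simp⟩)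
    have : v ∈ {x | ∀ g ∈ G, g x ∈ K} := hS ▸ Set.mem_univ v
    exact hvK (this 1 G.one_mem)
  have hmeet : ∀ {a : Equiv.Perm V} {γ : ℤ → V} {l : ℕ}, a ∈ G → IsLine T a γ l →
      ∀ g ∈ G, ∃ i, g (γ i) ∈ K := by
    intro a γ l ha h g hg
    obtain ⟨z, hz, hz'⟩ := hint (g * a * g⁻¹) (G.mul_mem (G.mul_mem hg ha) (G.inv_mem hg))
    obtain ⟨i, hi⟩ := h.exists_between hT (hG a ha) (g⁻¹ z)
    exact ⟨i, hC g hg (g⁻¹ z) (by simpa using hz) (a (g⁻¹ z)) hz' _ hi⟩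
  obtain ⟨a, ha, b, hb, hya, hyb, hfin⟩ := hgen
  obtain ⟨γ, l, hγ⟩ := exists_isLine hT hG ha hya
  obtain ⟨γ', l', hγ'⟩ := exists_isLine hT hG hb hyb
  have hfar : ∀ N : ℕ, ∃ k ∈ G, ∀ i, k (γ i) ∈ K → (N : ℤ) < |i| := by
    intro N
    obtain ⟨g, hg, hg0⟩ := hmiss (γ 0)
    obtain ⟨i₀, hi₀⟩ := hmeet ha hγ g hg
    have hNl : (N : ℤ) ≤ N * l := by
      have : (1 : ℤ) ≤ l := by exact_mod_cast hγ.pos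
      nlinarith
    have hne : i₀ ≠ 0 := by rintro rfl; exact hg0 hi₀
    rcases lt_or_gt_of_ne hne with hlt | hgt
    · refine ⟨g * a ^ N, G.mul_mem hg (G.pow_mem ha N), fun i hi => ?_⟩
      rw [Equiv.Perm.mul_apply, hγ.pow_shift] at hi
      have : i + N * l < 0 := by
        by_contra! hge
        exact hg0 (hC g hg _ hi₀ _ hi _ (hγ.between hlt.le hge))
      rw [abs_of_neg (by omega)]
      omega
    · refine ⟨g * (a ^ N)⁻¹, G.mul_mem hg (G.inv_mem (G.pow_mem ha N)), fun i hi => ?_⟩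
      rw [Equiv.Perm.mul_apply, hγ.inv_pow_shift] at hi
      have : 0 < i - N * l := by
        by_contra! hge
        exact hg0 (hC g hg _ hi _ hi₀ _ (hγ.between hge hgt.le))
      rw [abs_of_pos (by omega)]
      omega
  -- `D` is the axis of `b` together with a geodesic joining it to the axis of `a`
  obtain ⟨D, hD⟩ : ∃ D, D = {w | Between T (γ 0) w (γ' 0)} ∪ Set.range γ' := ⟨_, rfl⟩
  have hDc : Cvx T D := by
    rw [hD]
    exact cvx_union hT (cvx_interval hT _ _) (hγ'.cvx_range hT) (y := γ' 0)
      (by simp [Between]) ⟨0, rfl⟩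
  have hbdd : ∃ N : ℕ, ∀ i, γ i ∈ D → |i| ≤ N := by
    have hf : (γ ⁻¹' (autAxis T a ∩ autAxis T b)).Finite := hfin.preimage hγ.injective.injOn
    obtain ⟨M, hM⟩ := (hf.image Int.natAbs).bddAbove
    refine ⟨max M (T.dist (γ 0) (γ' 0)), fun i hi => ?_⟩
    rw [hD] at hi
    rcases hi with hi | ⟨j, hj⟩
    · have h1 := hγ.dist_eq 0 i
      have h2 : Between T (γ 0) (γ i) (γ' 0) := hi
      rw [zero_sub, abs_neg] at h1
      unfold Between at h2
      omega
    · have := hM ⟨i, ⟨hγ.mem_autAxis i, by rw [← hj]; exact hγ'.mem_autAxis j⟩, rfl⟩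
      rw [Int.abs_eq_natAbs]
      omega
  obtain ⟨N, hN⟩ := hbdd
  obtain ⟨k, hk, hkN⟩ := hfar N
  obtain ⟨i, hi⟩ := hmeet ha hγ k hk
  obtain ⟨j, hj⟩ := hmeet hb hγ' k hk
  obtain ⟨m, hm1, ⟨n, rfl⟩, hm3⟩ := helly hT (hC k hk) (hγ.cvx_range hT) hDc
    ⟨γ i, hi, i, rfl⟩ ⟨γ 0, ⟨0, rfl⟩, by rw [hD]; left; simp [Between]⟩
    ⟨γ' j, hj, by rw [hD]; right; exact ⟨j, rfl⟩⟩
  have := hkN n hm1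
  have := hN n hm3
  omega

end Trees


/-- Let `G` be a group of automorphisms of a tree `T` whose action is minimal (no proper
invariant subtree, expressed via convex invariant subsets) and of general type (two
hyperbolic elements without a common endpoint, i.e. whose axes share only finitely many
vertices). Then for any two half-trees `T₁, T₂` (determined by oriented edges), some
`g ∈ G` maps `T₁` into `T₂`. -/
theorem halfTree_into_halfTree {V : Type*} (T : SimpleGraph V) (hT : T.IsTree)
    (G : Subgroup (Equiv.Perm V))
    (hG : ∀ g ∈ G, ∀ u v : V, T.Adj (g u) (g v) ↔ T.Adj u v)
    (hmin : ∀ S : Set V, S.Nonempty →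
      (∀ u ∈ S, ∀ v ∈ S, ∀ w : V, T.dist u w + T.dist w v = T.dist u v → w ∈ S) →
      (∀ g ∈ G, (⇑g) '' S = S) → S = Set.univ)
    (hgen : ∃ g ∈ G, ∃ h ∈ G, IsHyperbolicAut T g ∧ IsHyperbolicAut T h ∧
      (autAxis T g ∩ autAxis T h).Finite)
    (u₁ v₁ u₂ v₂ : V) (h₁ : T.Adj u₁ v₁) (h₂ : T.Adj u₂ v₂) :
    ∃ g ∈ G, (⇑g) '' {w : V | T.dist w v₁ < T.dist w u₁} ⊆
      {w : V | T.dist w v₂ < T.dist w u₂} := by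
  have hd := dist_map_of_adj_iff hT hG
  -- `f₁` carries the first half-tree into its complement, `f₂` carries the complement of the second
  -- half-tree into the second half-tree
  obtain ⟨f₁, hf₁, H₁⟩ := exists_flip hT hd hmin hgen h₁.symm
  obtain ⟨f₂, hf₂, H₂⟩ := exists_flip hT hd hmin hgen h₂
  rcases HT_nested hT h₁ h₂ with h | h | h | h
  · exact ⟨1, G.one_mem, by rintro _ ⟨w, hw, rfl⟩; exact h hw⟩
  · exact ⟨f₂, hf₂, by rintro _ ⟨w, hw, rfl⟩; exact H₂ _ (h hw)⟩
  · exact ⟨f₁, hf₁, by rintro _ ⟨w, hw, rfl⟩; exact h (H₁ _ hw)⟩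
  · exact ⟨f₂ * f₁, G.mul_mem hf₂ hf₁, by rintro _ ⟨w, hw, rfl⟩; exact H₂ _ (h (H₁ _ hw))⟩
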